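/- Fix constants κ, δ, γ̃ > 0 with 2κ < δ. There exist ε₀, C, c > 0 such that for every r with 0 < r ≤ ε₀, every t ≥ 0 and all complex numbers a₀, a₁, a₂: |K̂₀(t,r) a₀ + K̂₁(t,r) a₁ + K̂₂(t,r) a₂ − Ĵ₀(t,r,a₂)| ≤ C e^{-c r² t} ( |a₀| + (1 + |sin(rt)|/r)(|a₁| + |a₂|) ), where Ĵ₀(t,r,a₂) := (cos(λ_I t) e^{λ_R t} − e^{λ₁ t}) a₂ / (2λ_R λ₁ − λ_I² − λ_R² − λ₁²) and λ₁ = λ₁(r), λ_R = λ_R(r), λ_I = λ_I(r). -/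

import Mathlib

/-!
Write `l = λ₁`, `p = λ_R`, `q = λ_I` and `D = (l - p)² + q²`. Two facts give the estimate.

*Location of the roots.* The real cubic is strictly increasing for small `r`, and its signs at
`-2κr²` and `-κr²/2` enclose `l`. Vieta's relation `l + 2p = -(δ+κ)r²` together with `2κ < δ` then
gives `p ≤ -κr²/2`, and the imaginary part of the cubic at `p + iq` gives `q = r + O(r³)`
(`blackstock_root_bounds`). In particular both exponentials are at most `exp (-κr²t/2)`, and
`D ≥ q² ≥ r²/4`.

*Cancellation.* The kernels are real, with closed forms in `cos (qt)` and `sin (qt)`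
(`khat_real_forms`). The denominator of `Ĵ₀` is `-D`, and `Ĵ₀` is exactly the part of `K̂₂ a₂` without
`sin (qt)`, namely the one of size `r⁻²`; what remains has coefficient `(p - l)/(qD) = O(r⁻¹)`
(`khat2_sub_jhat0`). The other kernels need no correction: `K̂₀` is bounded because its sine
coefficient is `O(r)`, and in `K̂₁` only the sine term is of size `r⁻¹` (`kernel_size_bounds`).

Finally `sin (qt)` is exchanged for `sin (rt)` at the cost of `|q - r| t = O(r³t)`; after division by
`r` this is `O(r²t)`, which half of the exponential decay absorbs (`exp_mul_sin_le`).
-/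

/-!
STATEMENT 10. First-order approximation of the small-frequency representation
`K̂₀a₀ + K̂₁a₁ + K̂₂a₂` of the Blackstock solution by
`Ĵ₀(t,r,a₂) = (cos(λ_I t)e^{λ_R t} − e^{λ₁ t}) a₂ / (2λ_Rλ₁ − λ_I² − λ_R² − λ₁²)`.
-/

noncomputable section

/-- The characteristic cubic of the linear Blackstock model in the Fourier space. -/
def blackstockCubic (κ δ γt r : ℝ) (z : ℂ) : ℂ :=
  z ^ 3 + (((δ + κ) * r ^ 2 : ℝ) : ℂ) * z ^ 2
    + (((1 + γt * r ^ 2) * r ^ 2 : ℝ) : ℂ) * z + ((κ * r ^ 4 : ℝ) : ℂ)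

/-- `K̂₀(t) = Σⱼ e^{λⱼt} (Πₖ≠ⱼ λₖ)/(Πₖ≠ⱼ (λⱼ−λₖ))`. -/
def Khat0 (l1 l2 l3 : ℂ) (t : ℝ) : ℂ :=
  Complex.exp (l1 * t) * (l2 * l3) / ((l1 - l2) * (l1 - l3))
    + Complex.exp (l2 * t) * (l1 * l3) / ((l2 - l1) * (l2 - l3))
    + Complex.exp (l3 * t) * (l1 * l2) / ((l3 - l1) * (l3 - l2))

/-- `K̂₁(t) = −Σⱼ e^{λⱼt} (Σₖ≠ⱼ λₖ)/(Πₖ≠ⱼ (λⱼ−λₖ))`. -/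
def Khat1 (l1 l2 l3 : ℂ) (t : ℝ) : ℂ :=
  -(Complex.exp (l1 * t) * (l2 + l3) / ((l1 - l2) * (l1 - l3))
    + Complex.exp (l2 * t) * (l1 + l3) / ((l2 - l1) * (l2 - l3))
    + Complex.exp (l3 * t) * (l1 + l2) / ((l3 - l1) * (l3 - l2)))

/-- `K̂₂(t) = Σⱼ e^{λⱼt} / (Πₖ≠ⱼ (λⱼ−λₖ))`. -/
def Khat2 (l1 l2 l3 : ℂ) (t : ℝ) : ℂ :=
  Complex.exp (l1 * t) / ((l1 - l2) * (l1 - l3))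
    + Complex.exp (l2 * t) / ((l2 - l1) * (l2 - l3))
    + Complex.exp (l3 * t) / ((l3 - l1) * (l3 - l2))

/-- `Ĵ₀(t,r,a₂) = (cos(λ_I t)e^{λ_R t} − e^{λ₁ t}) a₂ / (2λ_Rλ₁ − λ_I² − λ_R² − λ₁²)`. -/
def Jhat0 (l1 lR lI t : ℝ) (a2 : ℂ) : ℂ :=
  (((Real.cos (lI * t) * Real.exp (lR * t) - Real.exp (l1 * t)) /
      (2 * lR * l1 - lI ^ 2 - lR ^ 2 - l1 ^ 2) : ℝ) : ℂ) * a2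

/-! ### Location of the characteristic roots -/

/-- Relations between a real root `l` of the cubic and a conjugate pair `p ± iq`: dividing the cubic
by `(z - p)² + q²` leaves the factor `z + a + 2p`, so `l` is determined by `p`, and the vanishing
of the imaginary part of the cubic at `p + iq` determines `q²`. -/
lemma blackstock_vieta {κ δ γt r l p q : ℝ} (hq : 0 < q)
    (h1 : blackstockCubic κ δ γt r (l : ℂ) = 0)
    (h2 : blackstockCubic κ δ γt r ((p : ℂ) + (q : ℂ) * Complex.I) = 0) :
    l ^ 3 + (δ + κ) * r ^ 2 * l ^ 2 + (1 + γt * r ^ 2) * r ^ 2 * l + κ * r ^ 4 = 0 ∧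
    l = -((δ + κ) * r ^ 2 + 2 * p) ∧
    q ^ 2 = 3 * p ^ 2 + 2 * ((δ + κ) * r ^ 2) * p + (1 + γt * r ^ 2) * r ^ 2 := by
  have e1 : l ^ 3 + (δ + κ) * r ^ 2 * l ^ 2 + (1 + γt * r ^ 2) * r ^ 2 * l + κ * r ^ 4 = 0 := by
    unfold blackstockCubic at h1
    exact_mod_cast h1
  have e2 : (((p ^ 3 - 3 * p * q ^ 2 + (δ + κ) * r ^ 2 * (p ^ 2 - q ^ 2)
        + (1 + γt * r ^ 2) * r ^ 2 * p + κ * r ^ 4 : ℝ) : ℂ)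
      + ((q * (3 * p ^ 2 - q ^ 2 + 2 * ((δ + κ) * r ^ 2) * p
        + (1 + γt * r ^ 2) * r ^ 2) : ℝ) : ℂ) * Complex.I) = 0 := by
    rw [← h2]
    unfold blackstockCubic
    push_cast
    linear_combination (-3 * (p : ℂ) * q ^ 2 - (q : ℂ) ^ 3 * Complex.I
      - ((δ : ℂ) + κ) * r ^ 2 * q ^ 2) * Complex.I_sq
  have hre := congrArg Complex.re e2
  have him := congrArg Complex.im e2
  simp only [Complex.add_re, Complex.add_im, Complex.ofReal_re, Complex.ofReal_im,
    Complex.re_ofReal_mul, Complex.im_ofReal_mul, Complex.I_re, Complex.I_im, Complex.zero_re,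
    Complex.zero_im, mul_zero, mul_one, add_zero, zero_add] at hre him
  have hq2 := (mul_eq_zero.mp him).resolve_left hq.ne'
  refine ⟨e1, ?_, by linarith⟩
  have hprod : ((l - p) ^ 2 + q ^ 2) * (l + ((δ + κ) * r ^ 2 + 2 * p)) = 0 := by
    linear_combination e1 - hre + (p - l) * hq2
  have hD : (l - p) ^ 2 + q ^ 2 ≠ 0 := by positivity
  linarith [(mul_eq_zero.mp hprod).resolve_left hD]

/-- Low-frequency localisation of the roots: `λ₁` and `λ_R` are negative of exact order `r²`, and
`λ_I = r + O(r³)`. Since the real cubic is strictly increasing for small `r`, its signs at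
`-2κr²` and `-κr²/2` enclose `λ₁`. -/
lemma blackstock_root_bounds {κ δ γt r l p q : ℝ} (hκ : 0 < κ) (hγt : 0 < γt)
    (hκδ : 2 * κ < δ) (hr : 0 < r)
    (hN : (5 * (δ + κ) ^ 2 + γt) * r ^ 2 ≤ 1 / 2) (hq : 0 < q)
    (h1 : blackstockCubic κ δ γt r (l : ℂ) = 0)
    (h2 : blackstockCubic κ δ γt r ((p : ℂ) + (q : ℂ) * Complex.I) = 0) :
    l ≤ -(κ / 2) * r ^ 2 ∧ p ≤ -(κ / 2) * r ^ 2 ∧ |l| ≤ (δ + κ) * r ^ 2 ∧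
    |p| ≤ (δ + κ) * r ^ 2 ∧ |q - r| ≤ (5 * (δ + κ) ^ 2 + γt) * r ^ 3 ∧ r / 2 ≤ q ∧ q ≤ 2 * r := by
  obtain ⟨e1, hl, hq2⟩ := blackstock_vieta hq h1 h2
  obtain ⟨A, hA⟩ : ∃ A, A = δ + κ := ⟨_, rfl⟩
  have hA3 : 3 * κ < A := by linarith
  rw [← hA] at hN e1 hl hq2 ⊢
  clear h1 h2
  have hr2 : 0 < r ^ 2 := by positivity
  have hAr : A ^ 2 * r ^ 2 ≤ 1 / 10 := by nlinarith [mul_pos hγt hr2]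
  have hγr : γt * r ^ 2 ≤ 1 / 2 := by nlinarith [mul_nonneg (sq_nonneg A) hr2.le]
  have hγr0 : 0 < γt * r ^ 2 := by positivity
  -- the difference quotient of the cubic is a positive quadratic form
  have hmono : ∀ y : ℝ, 0 < l ^ 2 + l * y + y ^ 2 + A * r ^ 2 * (l + y)
      + (1 + γt * r ^ 2) * r ^ 2 := by
    intro y
    have hA4 : (A * r ^ 2) ^ 2 ≤ r ^ 2 / 10 := by nlinarith
    nlinarith [sq_nonneg (l - y), sq_nonneg (3 * (l + y) + 2 * (A * r ^ 2)), mul_pos hγr0 hr2]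
  have hκA : κ * A * r ^ 2 ≤ 1 / 30 := by nlinarith
  have hκκ : κ ^ 2 * r ^ 2 ≤ 1 / 90 := by nlinarith
  have hl_low : -(2 * κ) * r ^ 2 ≤ l := by
    by_contra! hcon
    have hm := hmono (-(2 * κ) * r ^ 2)
    have hfy : κ * r ^ 4 * (-8 * (κ ^ 2 * r ^ 2) + 4 * (κ * A * r ^ 2) - 2 * (γt * r ^ 2) - 1) < 0 := by
      apply mul_neg_of_pos_of_neg (by positivity)
      nlinarith [sq_nonneg (κ * r)]
    have key := mul_pos (sub_pos.mpr hcon) hm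
    linarith [show (-(2 * κ) * r ^ 2 - l) * (l ^ 2 + l * (-(2 * κ) * r ^ 2)
        + (-(2 * κ) * r ^ 2) ^ 2 + A * r ^ 2 * (l + -(2 * κ) * r ^ 2)
        + (1 + γt * r ^ 2) * r ^ 2)
      = κ * r ^ 4 * (-8 * (κ ^ 2 * r ^ 2) + 4 * (κ * A * r ^ 2) - 2 * (γt * r ^ 2) - 1) by
        linear_combination -e1]
  have hl_up : l ≤ -(κ / 2) * r ^ 2 := by
    by_contra! hcon
    have hm := hmono (-(κ / 2) * r ^ 2)
    have hfy : 0 < κ * r ^ 4 *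
        (-(κ ^ 2 * r ^ 2) / 8 + (κ * A * r ^ 2) / 4 - (γt * r ^ 2) / 2 + 1 / 2) := by
      apply mul_pos (by positivity)
      have : 0 < κ * A * r ^ 2 := by
        have : 0 < A := by linarith
        positivity
      linarith
    have key := mul_pos (sub_pos.mpr hcon) hm
    linarith [show (l - -(κ / 2) * r ^ 2) * (l ^ 2 + l * (-(κ / 2) * r ^ 2)
        + (-(κ / 2) * r ^ 2) ^ 2 + A * r ^ 2 * (l + -(κ / 2) * r ^ 2)
        + (1 + γt * r ^ 2) * r ^ 2)
      = -(κ * r ^ 4 *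
        (-(κ ^ 2 * r ^ 2) / 8 + (κ * A * r ^ 2) / 4 - (γt * r ^ 2) / 2 + 1 / 2)) by
        linear_combination e1]
  have hκr : 0 < κ * r ^ 2 := by positivity
  have hAκr : 3 * κ * r ^ 2 < A * r ^ 2 := by gcongr
  have hp_up : p ≤ -(κ / 2) * r ^ 2 := by linarith
  have hp : |p| ≤ A * r ^ 2 := by rw [abs_le]; constructor <;> linarith
  have hN0 : 0 ≤ 5 * A ^ 2 + γt := by positivity
  have hqr : |q ^ 2 - r ^ 2| ≤ (5 * A ^ 2 + γt) * r ^ 4 := by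
    have hpp : p ^ 2 ≤ (A * r ^ 2) ^ 2 := sq_le_sq' (by linarith [(abs_le.mp hp).1]) (abs_le.mp hp).2
    have hap : |A * r ^ 2 * p| ≤ (A * r ^ 2) ^ 2 := by
      have : 0 < A * r ^ 2 := by linarith
      rw [abs_mul, abs_of_pos this, sq (A * r ^ 2)]
      exact mul_le_mul_of_nonneg_left hp this.le
    have hγ4 : 0 < γt * r ^ 4 := by positivity
    rw [show q ^ 2 - r ^ 2 = 3 * p ^ 2 + 2 * (A * r ^ 2 * p) + γt * r ^ 4 by
        linear_combination hq2,
      show (5 * A ^ 2 + γt) * r ^ 4 = 5 * (A * r ^ 2) ^ 2 + γt * r ^ 4 by ring]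
    rw [abs_le] at hap ⊢
    constructor <;> linarith [sq_nonneg p, hap.1, hap.2, sq_nonneg (A * r ^ 2)]
  have hqr3 : |q - r| ≤ (5 * A ^ 2 + γt) * r ^ 3 := by
    have : |q - r| * r ≤ (5 * A ^ 2 + γt) * r ^ 3 * r := by
      calc |q - r| * r ≤ |q - r| * (q + r) := by gcongr; linarith
        _ = |q ^ 2 - r ^ 2| := by
          rw [show q ^ 2 - r ^ 2 = (q - r) * (q + r) by ring, abs_mul,
            abs_of_pos (by linarith : 0 < q + r)]
        _ ≤ _ := by linarith
    exact le_of_mul_le_mul_right this hr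
  have hhalf : |q - r| ≤ r / 2 := by nlinarith
  rw [abs_le] at hhalf
  refine ⟨hl_up, hp_up, ?_, hp, hqr3, by linarith [hhalf.1], by linarith [hhalf.2]⟩
  rw [abs_le]; constructor <;> linarith

/-! ### Closed forms of the kernels -/

/-- Both halves of the conjugate pair of exponentials, in trigonometric form. -/
lemma exp_conj_pair (p q t : ℝ) :
    Complex.exp (((p : ℂ) + (q : ℂ) * Complex.I) * t)
      = (Real.exp (p * t) : ℂ) * ((Real.cos (q * t) : ℂ) + (Real.sin (q * t) : ℂ) * Complex.I) ∧
    Complex.exp (((p : ℂ) - (q : ℂ) * Complex.I) * t)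
      = (Real.exp (p * t) : ℂ) * ((Real.cos (q * t) : ℂ) - (Real.sin (q * t) : ℂ) * Complex.I) := by
  constructor
  · rw [show ((p : ℂ) + (q : ℂ) * Complex.I) * t = ((p * t : ℝ) : ℂ) + ((q * t : ℝ) : ℂ) * Complex.I by
      push_cast; ring, Complex.exp_add, Complex.exp_mul_I]
    push_cast; rfl
  · rw [show ((p : ℂ) - (q : ℂ) * Complex.I) * t
        = ((p * t : ℝ) : ℂ) + ((-(q * t) : ℝ) : ℂ) * Complex.I by
      push_cast; ring, Complex.exp_add, Complex.exp_mul_I]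
    push_cast
    rw [Complex.cos_neg, Complex.sin_neg]
    ring

/-- A Lagrange-type sum over `l`, `p + iq`, `p - iq` with real weight `x` at `l` and conjugate
weights `(C ± iS)(u ± iv)` at the pair is real. All three kernels are of this form. -/
lemma lagrange_conj_sum {l p q : ℝ} (hq : 0 < q) (x C S u v : ℝ) :
    (x : ℂ) / (((l : ℂ) - (p + q * Complex.I)) * (l - (p - q * Complex.I)))
      + ((C : ℂ) + S * Complex.I) * (u + v * Complex.I)
        / (((p + q * Complex.I : ℂ) - l) * ((p + q * Complex.I) - (p - q * Complex.I)))
      + ((C : ℂ) - S * Complex.I) * (u - v * Complex.I)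
        / (((p - q * Complex.I : ℂ) - l) * ((p - q * Complex.I) - (p + q * Complex.I)))
    = ((x / ((l - p) ^ 2 + q ^ 2)
        + ((C * v + S * u) * (p - l) - (C * u - S * v) * q)
          / (q * ((l - p) ^ 2 + q ^ 2)) : ℝ) : ℂ) := by
  have hq' : (q : ℂ) ≠ 0 := by exact_mod_cast hq.ne'
  have hD : (((l : ℂ) - p) ^ 2 + (q : ℂ) ^ 2) ≠ 0 := by
    have : (l - p) ^ 2 + q ^ 2 ≠ 0 := by positivity
    exact_mod_cast this
  have hfac : ((l : ℂ) - (p + q * Complex.I)) * (l - (p - q * Complex.I))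
      = ((l : ℂ) - p) ^ 2 + (q : ℂ) ^ 2 := by
    linear_combination (-(q : ℂ) ^ 2) * Complex.I_sq
  have hI := Complex.I_ne_zero
  have hne := hfac ▸ hD
  have ha : (l : ℂ) - (p + q * Complex.I) ≠ 0 := left_ne_zero_of_mul hne
  have hb : (l : ℂ) - (p - q * Complex.I) ≠ 0 := right_ne_zero_of_mul hne
  -- rationalise the two complex denominators
  have d2 : ((p + q * Complex.I : ℂ) - l) * ((p + q * Complex.I) - (p - q * Complex.I))
      = -(2 * q * Complex.I) * (((l : ℂ) - p) ^ 2 + (q : ℂ) ^ 2) / (l - (p - q * Complex.I)) := by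
    rw [eq_div_iff hb, ← hfac]; ring
  have d3 : ((p - q * Complex.I : ℂ) - l) * ((p - q * Complex.I) - (p + q * Complex.I))
      = (2 * q * Complex.I) * (((l : ℂ) - p) ^ 2 + (q : ℂ) ^ 2) / (l - (p + q * Complex.I)) := by
    rw [eq_div_iff ha, ← hfac]; ring
  rw [hfac, d2, d3]
  push_cast
  generalize hDD : ((l : ℂ) - p) ^ 2 + (q : ℂ) ^ 2 = D at *
  clear hDD hfac hne ha hb d2 d3
  field_simp
  have h2 := Complex.I_sq
  generalize Complex.I = J at *
  linear_combination (-2 * J * q * S * v) * h2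

/-- Real closed forms of the three kernels, with `D = (l - p)² + q²`. -/
lemma khat_real_forms {l p q : ℝ} (hq : 0 < q) (t : ℝ) :
    Khat0 (l : ℂ) ((p : ℂ) + (q : ℂ) * Complex.I) ((p : ℂ) - (q : ℂ) * Complex.I) t
      = ((Real.exp (l * t) * (p ^ 2 + q ^ 2) / ((l - p) ^ 2 + q ^ 2)
        + Real.exp (p * t) * (l * (p ^ 2 - q ^ 2 - l * p) * Real.sin (q * t)
          + l * (l - 2 * p) * q * Real.cos (q * t)) / (q * ((l - p) ^ 2 + q ^ 2)) : ℝ) : ℂ) ∧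
    Khat1 (l : ℂ) ((p : ℂ) + (q : ℂ) * Complex.I) ((p : ℂ) - (q : ℂ) * Complex.I) t
      = ((-(Real.exp (l * t) * (2 * p) / ((l - p) ^ 2 + q ^ 2)
        + Real.exp (p * t) * ((p ^ 2 - q ^ 2 - l ^ 2) * Real.sin (q * t)
          - 2 * p * q * Real.cos (q * t)) / (q * ((l - p) ^ 2 + q ^ 2))) : ℝ) : ℂ) ∧
    Khat2 (l : ℂ) ((p : ℂ) + (q : ℂ) * Complex.I) ((p : ℂ) - (q : ℂ) * Complex.I) t
      = ((Real.exp (l * t) / ((l - p) ^ 2 + q ^ 2)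
        + Real.exp (p * t) * ((p - l) * Real.sin (q * t)
          - q * Real.cos (q * t)) / (q * ((l - p) ^ 2 + q ^ 2)) : ℝ) : ℂ) := by
  obtain ⟨hplus, hminus⟩ := exp_conj_pair p q t
  have hl : Complex.exp ((l : ℂ) * t) = (Real.exp (l * t) : ℂ) := by push_cast; rfl
  have key := fun x u v => lagrange_conj_sum (l := l) (p := p) hq x
    (Real.exp (p * t) * Real.cos (q * t)) (Real.exp (p * t) * Real.sin (q * t)) u v
  refine ⟨?_, ?_, ?_⟩
  · have k := key (Real.exp (l * t) * (p ^ 2 + q ^ 2)) (l * p) (-(l * q))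
    unfold Khat0
    rw [hplus, hminus, hl]
    refine Eq.trans ?_ (k.trans ?_)
    · push_cast
      congr 3
      · linear_combination (-(q : ℂ) ^ 2 * Complex.exp (l * t)) * Complex.I_sq
      · ring
      · ring
      · ring
    · congr 3; ring
  · have k := key (Real.exp (l * t) * (2 * p)) (l + p) (-q)
    unfold Khat1
    rw [hplus, hminus, hl, Complex.ofReal_neg]
    congr 1
    refine Eq.trans ?_ (k.trans ?_)
    · push_cast
      congr 3 <;> ring
    · congr 3; ring
  · have k := key (Real.exp (l * t)) 1 0
    unfold Khat2
    rw [hplus, hminus, hl]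
    refine Eq.trans ?_ (k.trans ?_)
    · push_cast
      simp only [zero_mul, add_zero, sub_zero, mul_one]
      congr 3 <;> ring
    · congr 3; ring

/-- After subtraction of `Ĵ₀`, only the sine part of `K̂₂` is left. -/
lemma khat2_sub_jhat0 {l p q : ℝ} (hq : 0 < q) (t : ℝ) (a2 : ℂ) :
    Khat2 (l : ℂ) ((p : ℂ) + (q : ℂ) * Complex.I) ((p : ℂ) - (q : ℂ) * Complex.I) t * a2
      - Jhat0 l p q t a2
      = ((Real.exp (p * t) * ((p - l) * Real.sin (q * t))
          / (q * ((l - p) ^ 2 + q ^ 2)) : ℝ) : ℂ) * a2 := by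
  rw [(khat_real_forms hq t).2.2, Jhat0, ← sub_mul, ← Complex.ofReal_sub]
  congr 2
  have hD : (l - p) ^ 2 + q ^ 2 ≠ 0 := by positivity
  rw [show 2 * p * l - q ^ 2 - p ^ 2 - l ^ 2 = -((l - p) ^ 2 + q ^ 2) by ring, div_neg]
  generalize (l - p) ^ 2 + q ^ 2 = D at *
  field_simp
  ring

/-! ### Estimates -/

/-- Exchange of `sin (qt)` for `sin (rt)`: the phase error `|q - r| t ≤ N r³ t` is absorbed by half
of the exponential decay. -/
lemma exp_mul_sin_le {κ N r q t : ℝ} (hκ : 0 < κ) (hN : 0 ≤ N) (hr : 0 < r) (ht : 0 ≤ t)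
    (hqr : |q - r| ≤ N * r ^ 3) :
    Real.exp (-(κ / 2) * r ^ 2 * t) * (|Real.sin (q * t)| / r)
      ≤ (1 + 4 * N / κ) * Real.exp (-(κ / 4) * r ^ 2 * t) * (1 + |Real.sin (r * t)| / r) := by
  have hsin : |Real.sin (q * t)| ≤ |Real.sin (r * t)| + N * r ^ 3 * t := by
    have h1 : |Real.sin (q * t) - Real.sin (r * t)| ≤ |q * t - r * t| :=
      Real.abs_sin_sub_sin_le _ _
    have h2 : |q * t - r * t| ≤ N * r ^ 3 * t := by
      rw [← sub_mul, abs_mul, abs_of_nonneg ht]; gcongr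
    linarith [abs_sub_abs_le_abs_sub (Real.sin (q * t)) (Real.sin (r * t))]
  have hdiv : |Real.sin (q * t)| / r ≤ |Real.sin (r * t)| / r + 4 * N / κ * (κ / 4 * r ^ 2 * t) := by
    rw [div_le_iff₀ hr]
    calc _ ≤ _ := hsin
      _ = _ := by field_simp
  set s := κ / 4 * r ^ 2 * t with hs
  have hs0 : 0 ≤ s := by positivity
  have hsplit : Real.exp (-(κ / 2) * r ^ 2 * t)
      = Real.exp (-(κ / 4) * r ^ 2 * t) * Real.exp (-s) := by
    rw [← Real.exp_add]; congr 1; rw [hs]; ring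
  have hse : Real.exp (-s) * s ≤ 1 := by
    rw [Real.exp_neg, inv_mul_le_iff₀ (Real.exp_pos s)]
    linarith [Real.add_one_le_exp s]
  have hs1 : Real.exp (-s) ≤ 1 := Real.exp_le_one_iff.mpr (by linarith)
  have hX : 0 ≤ |Real.sin (r * t)| / r := by positivity
  have hM : 0 ≤ 4 * N / κ := by positivity
  rw [hsplit, mul_assoc, mul_comm (1 + 4 * N / κ), mul_assoc (Real.exp _) (1 + 4 * N / κ)]
  refine mul_le_mul_of_nonneg_left ?_ (Real.exp_pos _).le
  calc Real.exp (-s) * (|Real.sin (q * t)| / r)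
      ≤ Real.exp (-s) * (|Real.sin (r * t)| / r + 4 * N / κ * s) := by gcongr
    _ = Real.exp (-s) * (|Real.sin (r * t)| / r) + 4 * N / κ * (Real.exp (-s) * s) := by ring
    _ ≤ 1 * (|Real.sin (r * t)| / r) + 4 * N / κ * 1 := by gcongr
    _ ≤ (1 + 4 * N / κ) * (1 + |Real.sin (r * t)| / r) := by nlinarith [mul_nonneg hM hX]

set_option maxHeartbeats 800000 in
/-- Bounds for the real closed forms of `K̂₀`, `K̂₁` and `K̂₂ - Ĵ₀` from the sizes of the roots; they
come from `D ≥ q² ≥ r²/4`. Here `E` bounds both exponentials. -/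
lemma kernel_size_bounds {A r l p q e1 e2 E C S : ℝ} (hA : 0 < A) (hr : 0 < r) (hr1 : r ≤ 1)
    (hl : |l| ≤ A * r ^ 2) (hp : |p| ≤ A * r ^ 2) (hq1 : r / 2 ≤ q) (hq2 : q ≤ 2 * r)
    (he1 : |e1| ≤ E) (he2 : |e2| ≤ E) (hC : |C| ≤ 1) (hS : |S| ≤ 1) :
    |e1 * (p ^ 2 + q ^ 2) / ((l - p) ^ 2 + q ^ 2)
        + e2 * (l * (p ^ 2 - q ^ 2 - l * p) * S + l * (l - 2 * p) * q * C)
          / (q * ((l - p) ^ 2 + q ^ 2))|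
      ≤ (4 * (A ^ 2 + 4) + 8 * A * (2 * A ^ 2 + 4) + 12 * A ^ 2) * E ∧
    |-(e1 * (2 * p) / ((l - p) ^ 2 + q ^ 2)
        + e2 * ((p ^ 2 - q ^ 2 - l ^ 2) * S - 2 * p * q * C)
          / (q * ((l - p) ^ 2 + q ^ 2)))|
      ≤ 16 * A * E + 8 * (2 * A ^ 2 + 4) * (E * (|S| / r)) ∧
    |e2 * ((p - l) * S) / (q * ((l - p) ^ 2 + q ^ 2))| ≤ 16 * A * (E * (|S| / r)) := by
  have hE : 0 ≤ E := (abs_nonneg e1).trans he1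
  have hq : 0 < q := by linarith
  have hD : r ^ 2 / 4 ≤ (l - p) ^ 2 + q ^ 2 := by nlinarith [sq_nonneg (l - p)]
  generalize (l - p) ^ 2 + q ^ 2 = D at *
  have hr2 : 0 < r ^ 2 := by positivity
  have hr21 : r ^ 2 ≤ 1 := by nlinarith
  have hD0 : 0 < D := by linarith
  have hDinv : D⁻¹ ≤ 4 / r ^ 2 := by
    rw [inv_le_comm₀ hD0 (by positivity), inv_div]; exact hD
  have hqinv : q⁻¹ ≤ 2 / r := by
    rw [inv_le_comm₀ hq (by positivity), inv_div]; exact hq1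
  have hDi0 : 0 < D⁻¹ := inv_pos.mpr hD0
  have hqc : q * q⁻¹ = 1 := mul_inv_cancel₀ hq.ne'
  have hqi0 : 0 < q⁻¹ := inv_pos.mpr hq
  -- a term over `D` is bounded; a sine term over `qD` costs one factor `1/r`
  have hfrac : ∀ {e x M : ℝ}, |e| ≤ E → |x| ≤ M * r ^ 2 → |e * x * D⁻¹| ≤ 4 * M * E := by
    intro e x M he hx
    have hM : 0 ≤ M * r ^ 2 := (abs_nonneg x).trans hx
    rw [abs_mul, abs_mul, abs_of_pos hDi0]
    calc |e| * |x| * D⁻¹ ≤ E * (M * r ^ 2) * (4 / r ^ 2) := by gcongr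
      _ = 4 * M * E := by field_simp
  have hfracS : ∀ {e x M : ℝ}, |e| ≤ E → |x| ≤ M * r ^ 2 →
      |e * x * S * (q⁻¹ * D⁻¹)| ≤ 8 * M * (E * (|S| / r)) := by
    intro e x M he hx
    have hM : 0 ≤ M * r ^ 2 := (abs_nonneg x).trans hx
    rw [abs_mul, abs_mul, abs_mul, abs_mul, abs_of_pos hDi0, abs_of_pos hqi0]
    calc |e| * |x| * |S| * (q⁻¹ * D⁻¹)
        ≤ E * (M * r ^ 2) * |S| * (2 / r * (4 / r ^ 2)) := by gcongr
      _ = 8 * M * (E * (|S| / r)) := by field_simp; ring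
  have heC : |e2 * C| ≤ E := by
    rw [abs_mul]; nlinarith [abs_nonneg e2, abs_nonneg C]
  have hpp : p ^ 2 ≤ A ^ 2 * r ^ 2 := by
    rw [← sq_abs]
    calc |p| ^ 2 ≤ (A * r ^ 2) ^ 2 := by gcongr
      _ = A ^ 2 * r ^ 2 * r ^ 2 := by ring
      _ ≤ A ^ 2 * r ^ 2 * 1 := by gcongr
      _ = _ := by ring
  have hll : l ^ 2 ≤ A ^ 2 * r ^ 2 := by
    rw [← sq_abs]
    calc |l| ^ 2 ≤ (A * r ^ 2) ^ 2 := by gcongr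
      _ = A ^ 2 * r ^ 2 * r ^ 2 := by ring
      _ ≤ A ^ 2 * r ^ 2 * 1 := by gcongr
      _ = _ := by ring
  have hqq : q ^ 2 ≤ 4 * r ^ 2 := by nlinarith
  have hlp : |l * p| ≤ A ^ 2 * r ^ 2 := by
    rw [abs_le]; constructor <;> nlinarith [sq_nonneg (l + p), sq_nonneg (l - p)]
  have hlp' := abs_le.mp hlp
  have hl' := abs_le.mp hl
  have hp' := abs_le.mp hp
  have hpq : |p ^ 2 - q ^ 2 - l * p| ≤ (2 * A ^ 2 + 4) * r ^ 2 := by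
    rw [abs_le]; constructor <;> nlinarith [sq_nonneg p, sq_nonneg q, mul_pos (pow_pos hA 2) hr2]
  have hpql : |p ^ 2 - q ^ 2 - l ^ 2| ≤ (2 * A ^ 2 + 4) * r ^ 2 := by
    rw [abs_le]; constructor <;>
      nlinarith [sq_nonneg p, sq_nonneg q, sq_nonneg l, mul_pos (pow_pos hA 2) hr2]
  have hES : E * (|S| / r) * r ≤ E := by
    rw [mul_assoc, div_mul_cancel₀ _ hr.ne']
    exact mul_le_of_le_one_right hE hS
  refine ⟨?_, ?_, ?_⟩
  · have t1 := hfrac (x := p ^ 2 + q ^ 2) (M := A ^ 2 + 4) he1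
      (by rw [abs_of_nonneg (by positivity)]; linarith)
    have t2 := hfracS (x := l * (p ^ 2 - q ^ 2 - l * p)) (M := A * (2 * A ^ 2 + 4) * r ^ 2) he2
      (by
        rw [abs_mul]
        calc _ ≤ A * r ^ 2 * ((2 * A ^ 2 + 4) * r ^ 2) := by gcongr
          _ = _ := by ring)
    have t3 := hfrac (x := l * (l - 2 * p)) (M := 3 * A ^ 2) heC
      (by rw [abs_le]; constructor <;> nlinarith [sq_nonneg l])
    have t2' : 8 * (A * (2 * A ^ 2 + 4) * r ^ 2) * (E * (|S| / r))
        ≤ 8 * A * (2 * A ^ 2 + 4) * E := by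
      calc _ = 8 * A * (2 * A ^ 2 + 4) * (E * (|S| / r) * r) * r := by ring
        _ ≤ 8 * A * (2 * A ^ 2 + 4) * E * 1 := by gcongr
        _ = _ := by ring
    rw [show e1 * (p ^ 2 + q ^ 2) / D
        + e2 * (l * (p ^ 2 - q ^ 2 - l * p) * S + l * (l - 2 * p) * q * C) / (q * D)
      = e1 * (p ^ 2 + q ^ 2) * D⁻¹ + e2 * (l * (p ^ 2 - q ^ 2 - l * p)) * S * (q⁻¹ * D⁻¹)
        + e2 * C * (l * (l - 2 * p)) * D⁻¹ by
        rw [div_eq_mul_inv, div_eq_mul_inv, mul_inv]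
        linear_combination (e2 * l * (l - 2 * p) * C * D⁻¹) * hqc]
    refine (abs_add_three _ _ _).trans ?_
    linarith
  · have t1 := hfrac (x := 2 * p) (M := 2 * A) he1
      (by rw [abs_mul, abs_two]; linarith)
    have t2 := hfracS (x := p ^ 2 - q ^ 2 - l ^ 2) he2 hpql
    have t3 := hfrac (x := -(2 * p)) (M := 2 * A) heC
      (by rw [abs_neg, abs_mul, abs_two]; linarith)
    rw [abs_neg, show e1 * (2 * p) / D
        + e2 * ((p ^ 2 - q ^ 2 - l ^ 2) * S - 2 * p * q * C) / (q * D)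
      = e1 * (2 * p) * D⁻¹ + e2 * (p ^ 2 - q ^ 2 - l ^ 2) * S * (q⁻¹ * D⁻¹)
        + e2 * C * (-(2 * p)) * D⁻¹ by
        rw [div_eq_mul_inv, div_eq_mul_inv, mul_inv]
        linear_combination (e2 * (-(2 * p)) * C * D⁻¹) * hqc]
    refine (abs_add_three _ _ _).trans ?_
    linarith
  · have t2 := hfracS (x := p - l) (M := 2 * A) he2
      (by rw [abs_le]; constructor <;> linarith [hl'.1, hl'.2, hp'.1, hp'.2])
    rw [show e2 * ((p - l) * S) / (q * D) = e2 * (p - l) * S * (q⁻¹ * D⁻¹) by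
      rw [div_eq_mul_inv, mul_inv]; ring]
    linarith

theorem blackstock_first_order_fourier_approximation
    (κ δ γt : ℝ) (hκ : 0 < κ) (hδ : 0 < δ) (hγt : 0 < γt) (hκδ : 2 * κ < δ) :
    ∃ ε₀ C c : ℝ, 0 < ε₀ ∧ 0 < C ∧ 0 < c ∧ ∀ r : ℝ, 0 < r → r ≤ ε₀ →
      ∀ l1 lR lI : ℝ, 0 < lI →
        blackstockCubic κ δ γt r (l1 : ℂ) = 0 →
        blackstockCubic κ δ γt r ((lR : ℂ) + (lI : ℂ) * Complex.I) = 0 →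
        ∀ t : ℝ, 0 ≤ t → ∀ a0 a1 a2 : ℂ,
          ‖Khat0 (l1 : ℂ) ((lR : ℂ) + (lI : ℂ) * Complex.I)
                ((lR : ℂ) - (lI : ℂ) * Complex.I) t * a0
            + Khat1 (l1 : ℂ) ((lR : ℂ) + (lI : ℂ) * Complex.I)
                ((lR : ℂ) - (lI : ℂ) * Complex.I) t * a1
            + Khat2 (l1 : ℂ) ((lR : ℂ) + (lI : ℂ) * Complex.I)
                ((lR : ℂ) - (lI : ℂ) * Complex.I) t * a2
            - Jhat0 l1 lR lI t a2‖
          ≤ C * Real.exp (-c * r ^ 2 * t) *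
              (‖a0‖ + (1 + |Real.sin (r * t)| / r) * (‖a1‖ + ‖a2‖)) := by
  obtain ⟨A, hA⟩ : ∃ A, A = δ + κ := ⟨_, rfl⟩
  obtain ⟨N, hN⟩ : ∃ N, N = 5 * A ^ 2 + γt := ⟨_, rfl⟩
  have hA0 : 0 < A := by linarith
  have hN0 : 0 < N := by rw [hN]; positivity
  obtain ⟨C0, hC0⟩ : ∃ C0, C0 = 4 * (A ^ 2 + 4) + 8 * A * (2 * A ^ 2 + 4) + 12 * A ^ 2 := ⟨_, rfl⟩
  obtain ⟨B, hB⟩ : ∃ B, B = 1 + 4 * N / κ := ⟨_, rfl⟩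
  obtain ⟨C1, hC1⟩ : ∃ C1, C1 = 16 * A + 8 * (2 * A ^ 2 + 4) * B := ⟨_, rfl⟩
  have hC00 : 0 < C0 := by rw [hC0]; positivity
  have hB0 : 0 < B := by rw [hB]; positivity
  have hC10 : 0 < C1 := by rw [hC1]; positivity
  -- this `ε₀` ensures `r ≤ 1` and `N r² ≤ 1/2`; half of the decay rate `κ/2` of the exponentials
  -- is spent in `exp_mul_sin_le`
  refine ⟨1 / (2 * (N + 1)), C0 + C1 + 16 * A * B, κ / 4, by positivity, by positivity,
    by positivity, ?_⟩
  intro r hr hrε l p q hq h1 h2 t ht a0 a1 a2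
  have hrN : r * (2 * (N + 1)) ≤ 1 := (le_div_iff₀ (by positivity)).mp hrε
  have hr1 : r ≤ 1 := by nlinarith
  have hNr : N * r ^ 2 ≤ 1 / 2 := by nlinarith [mul_pos hN0 hr]
  obtain ⟨hl, hp, hlA, hpA, hqr, hq1, hq2⟩ :=
    blackstock_root_bounds hκ hγt hκδ hr (by rw [← hA, ← hN]; exact hNr) hq h1 h2
  rw [← hA] at hlA hpA hqr
  rw [← hN] at hqr
  set E := Real.exp (-(κ / 2) * r ^ 2 * t) with hE
  set F := Real.exp (-(κ / 4) * r ^ 2 * t) with hF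
  set H := 1 + |Real.sin (r * t)| / r with hH
  have hF0 : 0 < F := Real.exp_pos _
  have hH1 : 1 ≤ H := by
    have : 0 ≤ |Real.sin (r * t)| / r := by positivity
    linarith
  have he1 : |Real.exp (l * t)| ≤ E := by
    rw [Real.abs_exp, hE]; gcongr
  have he2 : |Real.exp (p * t)| ≤ E := by
    rw [Real.abs_exp, hE]; gcongr
  have hEF : E ≤ F := by
    have : 0 ≤ κ * (r ^ 2 * t) := by positivity
    rw [hE, hF]; apply Real.exp_le_exp.mpr; linarith
  have hEFH : E ≤ F * H := hEF.trans (le_mul_of_one_le_right hF0.le hH1)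
  have hS : E * (|Real.sin (q * t)| / r) ≤ B * (F * H) := by
    rw [← mul_assoc, hB]; exact exp_mul_sin_le hκ hN0.le hr ht hqr
  obtain ⟨b0, b1, b2⟩ := kernel_size_bounds hA0 hr hr1 hlA hpA hq1 hq2 he1 he2
    (Real.abs_cos_le_one (q * t)) (Real.abs_sin_le_one (q * t))
  rw [← hC0] at b0
  obtain ⟨k0, k1, -⟩ := khat_real_forms (l := l) (p := p) hq t
  rw [add_sub_assoc, khat2_sub_jhat0 hq, k0, k1]
  refine (norm_add₃_le).trans ?_
  simp only [norm_mul, Complex.norm_real, Real.norm_eq_abs]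
  have c0 := b0.trans (mul_le_mul_of_nonneg_left hEF hC00.le)
  have c1 : _ ≤ C1 * (F * H) := b1.trans (by
    calc _ ≤ 16 * A * (F * H) + 8 * (2 * A ^ 2 + 4) * (B * (F * H)) := by gcongr
      _ = _ := by rw [hC1]; ring)
  have c2 : _ ≤ 16 * A * B * (F * H) := b2.trans (by
    calc _ ≤ 16 * A * (B * (F * H)) := by gcongr
      _ = _ := by ring)
  calc _ ≤ C0 * F * ‖a0‖ + C1 * (F * H) * ‖a1‖ + 16 * A * B * (F * H) * ‖a2‖ := by gcongr
    _ ≤ (C0 + C1 + 16 * A * B) * F * ‖a0‖ + (C0 + C1 + 16 * A * B) * (F * H) * ‖a1‖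
        + (C0 + C1 + 16 * A * B) * (F * H) * ‖a2‖ := by
      have hAB : 0 < 16 * A * B := by positivity
      gcongr <;> linarith
    _ = _ := by ring

end
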